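/- Let Z : ℝ² → ℂ be a continuous local homeomorphism and τ ∈ ℂ with Im(τ) > 0, such that Z(x+1,y) = Z(x,y) + 1 and Z(x,y+1) = Z(x,y) + τ for all (x,y). Then Z is a homeomorphism from ℝ² onto ℂ. -/

import Mathlib

/-!
By quasi-periodicity, `Z (x, y) = x + y τ + P (x, y)` where `P` is continuous and `ℤ²`-periodic,
hence bounded (`exists_norm_sub_linear_le`). As `Im τ > 0`, the linear part is proper, and therefore
so is `Z` (`isProperMap_of_quasiperiodic`). A proper local homeomorphism is a closed map with finite
fibres, hence a covering map, and a covering map from a connected space onto a simply connected,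
locally path-connected one is bijective (`IsCoveringMap.bijective_of_simplyConnected`): the identity
of the base lifts to a section through any prescribed point, and by uniqueness of lifts this section
is a two-sided inverse.
-/

theorem exists_norm_sub_linear_le (Z : ℝ × ℝ → ℂ) (τ : ℂ) (hZ : Continuous Z)
    (h1 : ∀ x y : ℝ, Z (x + 1, y) = Z (x, y) + 1)
    (h2 : ∀ x y : ℝ, Z (x, y + 1) = Z (x, y) + τ) :
    ∃ C : ℝ, ∀ p : ℝ × ℝ, ‖Z p - (p.1 + p.2 * τ)‖ ≤ C := by
  let P : ℝ × ℝ → ℂ := fun p ↦ Z p - (p.1 + p.2 * τ)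
  have hP : Continuous P := by fun_prop
  have hP1 (y : ℝ) : Function.Periodic (fun x ↦ P (x, y)) 1 := fun x ↦ by
    simp only [P, h1]; push_cast; ring
  have hP2 (x : ℝ) : Function.Periodic (fun y ↦ P (x, y)) 1 := fun y ↦ by
    simp only [P, h2]; push_cast; ring
  obtain ⟨C, hC⟩ := ((isCompact_Icc (a := (0 : ℝ)) (b := 1)).prod
    (isCompact_Icc (a := (0 : ℝ)) (b := 1))).exists_bound_of_continuousOn hP.continuousOn
  refine ⟨C, fun ⟨x, y⟩ ↦ ?_⟩
  obtain ⟨x', hx', hxx⟩ := (hP1 y).exists_mem_Ico₀ one_pos x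
  obtain ⟨y', hy', hyy⟩ := (hP2 x').exists_mem_Ico₀ one_pos y
  have key : P (x, y) = P (x', y') := hxx.trans hyy
  change ‖P (x, y)‖ ≤ C
  rw [key]
  exact hC _ ⟨⟨hx'.1, hx'.2.le⟩, hy'.1, hy'.2.le⟩

theorem isProperMap_of_quasiperiodic (Z : ℝ × ℝ → ℂ) (τ : ℂ) (hτ : 0 < τ.im) (hZ : Continuous Z)
    (h1 : ∀ x y : ℝ, Z (x + 1, y) = Z (x, y) + 1)
    (h2 : ∀ x y : ℝ, Z (x, y + 1) = Z (x, y) + τ) : IsProperMap Z := by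
  obtain ⟨C, hC⟩ := exists_norm_sub_linear_le Z τ hZ h1 h2
  refine isProperMap_iff_isCompact_preimage.2 ⟨hZ, fun K hK ↦ ?_⟩
  obtain ⟨R, hR⟩ := hK.isBounded.exists_norm_le
  -- On `Z ⁻¹' K`, the imaginary part of `x + y τ` bounds `y`, and then the real part bounds `x`.
  set B : ℝ := (R + C) / τ.im with hB
  set A : ℝ := R + C + B * |τ.re| with hA
  refine ((isCompact_Icc (a := -A) (b := A)).prod (isCompact_Icc (a := -B) (b := B))).of_isClosed_subset
    (hK.isClosed.preimage hZ) fun ⟨x, y⟩ hp ↦ ?_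
  have hlin : ‖(x : ℂ) + y * τ‖ ≤ R + C := by
    have e : (x : ℂ) + y * τ = Z (x, y) - (Z (x, y) - (x + y * τ)) := by ring
    rw [e]
    exact (norm_sub_le _ _).trans (add_le_add (hR _ hp) (hC (x, y)))
  have him : |y * τ.im| ≤ R + C := by
    simpa using (Complex.abs_im_le_norm _).trans hlin
  have hre : |x + y * τ.re| ≤ R + C := by
    simpa using (Complex.abs_re_le_norm _).trans hlin
  have hy : |y| ≤ B := by
    rwa [abs_mul, abs_of_pos hτ, ← le_div_iff₀ hτ] at him
  have hx : |x| ≤ A := by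
    calc |x| = |(x + y * τ.re) - y * τ.re| := by ring_nf
      _ ≤ |x + y * τ.re| + |y * τ.re| := abs_sub _ _
      _ ≤ A := by
        rw [abs_mul, hA]
        gcongr
  exact ⟨abs_le.1 hx, abs_le.1 hy⟩

theorem IsProperMap.isCoveringMap_of_isLocalHomeomorph {E X : Type*} [TopologicalSpace E]
    [TopologicalSpace X] [T2Space E] [T1Space X] {f : E → X} (hf : IsProperMap f)
    (h : IsLocalHomeomorph f) : IsCoveringMap f := by
  rw [isCoveringMap_iff_isCoveringMapOn_univ]
  refine hf.isClosedMap.isCoveringMapOn_of_isLocalHomeomorphOn (fun x _ ↦ ?_)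
    (by simpa [← isLocalHomeomorph_iff_isLocalHomeomorphOn_univ])
  -- The fibre is compact by properness and discrete because `f` is locally injective.
  refine (hf.isCompact_preimage isCompact_singleton).finite
    (.of_openPartialHomeomorph f subset_rfl fun e _ ↦ ?_)
  obtain ⟨φ, hφ, rfl⟩ := h e
  exact ⟨φ, hφ, rfl⟩

theorem IsCoveringMap.bijective_of_simplyConnected {E X : Type*} [TopologicalSpace E]
    [TopologicalSpace X] [ConnectedSpace E] [SimplyConnectedSpace X] [LocallyPathConnectedSpace X]
    {f : E → X} (hf : IsCoveringMap f) : Function.Bijective f := by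
  have lift (e : E) : ∃ F : C(X, E), F (f e) = e ∧ f ∘ F = id :=
    (hf.existsUnique_continuousMap_lifts (ContinuousMap.id X) (f e) e rfl).exists
  constructor
  · intro a b hab
    obtain ⟨F, hFa, hF⟩ := lift a
    -- `F ∘ f` and `id` both lift `f` and agree at `a`.
    have key : F ∘ f = id :=
      hf.eq_of_comp_eq (F.continuous.comp hf.continuous) continuous_id
        (by rw [← Function.comp_assoc, hF]; rfl) a hFa
    rw [← hFa, hab]
    exact congrFun key b
  · intro x
    obtain ⟨e⟩ : Nonempty E := inferInstance
    obtain ⟨F, -, hF⟩ := lift e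
    exact ⟨F x, congrFun hF x⟩

theorem stmt_0 (Z : ℝ × ℝ → ℂ) (τ : ℂ) (hτ : 0 < τ.im)
    (hZ : IsLocalHomeomorph Z)
    (h1 : ∀ x y : ℝ, Z (x + 1, y) = Z (x, y) + 1)
    (h2 : ∀ x y : ℝ, Z (x, y + 1) = Z (x, y) + τ) :
    ∃ e : (ℝ × ℝ) ≃ₜ ℂ, ⇑e = Z := by
  have hcov : IsCoveringMap Z :=
    (isProperMap_of_quasiperiodic Z τ hτ hZ.continuous h1 h2).isCoveringMap_of_isLocalHomeomorph hZ
  exact ⟨hZ.toHomeomorphOfBijective hcov.bijective_of_simplyConnected, rfl⟩
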